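/- Let E be a finite set and let f : E → {a,b,c,d} be a uniformly random coloring. For any closed downward families 𝒰, 𝒱, 𝒲 of subsets of E, writing 𝒰_{ab} for the event {E_{ab}(f) ∈ 𝒰}, 𝒱_{ac} for {E_{ac}(f) ∈ 𝒱}, and 𝒲_{ad} for {E_{ad}(f) ∈ 𝒲}, one has P(𝒰_{ab} ∩ 𝒱_{ac} ∩ 𝒲_{ad}) ≤ P(𝒰_{ab}) · P(𝒱_{ac}) · P(𝒲_{ad}). -/

import Mathlib

open Finset

/-- `Est f s t` is the set of elements colored `s` or `t` by the coloring `f`.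
Colors: `a = 0`, `b = 1`, `c = 2`, `d = 3`. -/
def Est {E : Type*} [Fintype E] [DecidableEq E] (f : E → Fin 4) (s t : Fin 4) : Finset E :=
  Finset.univ.filter (fun e => f e = s ∨ f e = t)

/-- Summing over the first coordinate: a coloring of `Fin (n + 1)` is a color and a coloring of
`Fin n`. -/
theorem sum_fin_succ_coloring {n : ℕ} (F : (Fin (n + 1) → Fin 4) → ℚ) :
    ∑ f, F f = ∑ f : Fin n → Fin 4, F (Fin.cons 0 f) + ∑ f : Fin n → Fin 4, F (Fin.cons 1 f)
      + ∑ f : Fin n → Fin 4, F (Fin.cons 2 f) + ∑ f : Fin n → Fin 4, F (Fin.cons 3 f) := by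
  rw [← (Fin.consEquiv fun _ : Fin (n + 1) => Fin 4).sum_comp, Fintype.sum_prod_type,
    Fin.sum_univ_four]
  rfl

/-- `pairIndicator t f` is the indicator function of the set of elements colored `0` or `t`. -/
def pairIndicator {ι : Type*} (t : Fin 4) (f : ι → Fin 4) : ι → Bool :=
  fun i => decide (f i = 0 ∨ f i = t)

theorem pairIndicator_cons {n : ℕ} (t c : Fin 4) (f : Fin n → Fin 4) :
    pairIndicator t (Fin.cons c f : Fin (n + 1) → Fin 4)
      = (Fin.cons (decide (c = 0 ∨ c = t)) (pairIndicator t f) : Fin (n + 1) → Bool) := by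
  funext i
  refine Fin.cases ?_ (fun j => ?_) i <;> simp [pairIndicator]

theorem antitone_comp_cons {n : ℕ} {u : (Fin (n + 1) → Bool) → ℚ} (hu : Antitone u) (b : Bool) :
    Antitone fun g : Fin n → Bool => u (Fin.cons b g) :=
  fun _ _ h => hu (Fin.cons_le_cons.2 ⟨le_rfl, h⟩)

theorem sum_cons_true_le_sum_cons_false {n : ℕ} {u : (Fin (n + 1) → Bool) → ℚ}
    (hu : Antitone u) (t : Fin 4) :
    ∑ f : Fin n → Fin 4, u (Fin.cons true (pairIndicator t f))
      ≤ ∑ f : Fin n → Fin 4, u (Fin.cons false (pairIndicator t f)) :=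
  Finset.sum_le_sum fun _ _ => hu (Fin.cons_le_cons.2 ⟨Bool.false_le _, le_rfl⟩)

/-- The inequality for a single element: the difference of the two sides is
`8 (u₀ - u₁) (v₀ - v₁) (w₀ - w₁)`. -/
theorem single_element_neg_dep {u₀ u₁ v₀ v₁ w₀ w₁ : ℚ} (hu : u₁ ≤ u₀) (hv : v₁ ≤ v₀)
    (hw : w₁ ≤ w₀) :
    16 * (u₁ * v₁ * w₁ + u₁ * v₀ * w₀ + u₀ * v₁ * w₀ + u₀ * v₀ * w₁)
      ≤ (2 * u₀ + 2 * u₁) * (2 * v₀ + 2 * v₁) * (2 * w₀ + 2 * w₁) := by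
  have h := mul_nonneg (mul_nonneg (sub_nonneg.2 hu) (sub_nonneg.2 hv)) (sub_nonneg.2 hw)
  linarith

/-- Negative dependence for antitone functions on `Fin n → Bool`, by induction on `n`. -/
theorem sum_mul_le_of_antitone (n : ℕ) (u v w : (Fin n → Bool) → ℚ)
    (hu : Antitone u) (hv : Antitone v) (hw : Antitone w) :
    16 ^ n * ∑ f : Fin n → Fin 4,
        u (pairIndicator 1 f) * v (pairIndicator 2 f) * w (pairIndicator 3 f)
      ≤ (∑ f : Fin n → Fin 4, u (pairIndicator 1 f)) *
        (∑ f : Fin n → Fin 4, v (pairIndicator 2 f)) *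
        (∑ f : Fin n → Fin 4, w (pairIndicator 3 f)) := by
  induction n with
  | zero => simp
  | succ n ih =>
    have key (x y z : Bool) := ih _ _ _ (antitone_comp_cons hu x) (antitone_comp_cons hv y)
      (antitone_comp_cons hw z)
    have one := single_element_neg_dep (sum_cons_true_le_sum_cons_false hu 1)
      (sum_cons_true_le_sum_cons_false hv 2) (sum_cons_true_le_sum_cons_false hw 3)
    simp only [sum_fin_succ_coloring, pairIndicator_cons]
    simp only [Fin.isValue, true_or, decide_true, or_true, Fin.reduceEq, or_self, decide_false]
    have h₀ := key true true true
    have h₁ := key true false false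
    have h₂ := key false true false
    have h₃ := key false false true
    rw [pow_succ]
    linarith

theorem antitone_indicator_of_lower {E : Type*} [Fintype E] [DecidableEq E] {n : ℕ}
    (e : E ≃ Fin n) (𝒰 : Finset (Finset E))
    (hU : ∀ A ∈ 𝒰, ∀ B : Finset E, B ⊆ A → B ∈ 𝒰) :
    Antitone fun g : Fin n → Bool =>
      if Finset.univ.filter (fun i => g (e i) = true) ∈ 𝒰 then (1 : ℚ) else 0 := by
  intro g g' h
  dsimp only
  split_ifs with h₁ h₂
  · rfl
  · exact absurd (hU _ h₁ _ (Finset.monotone_filter_right _ fun i _ hi => h (e i) hi)) h₂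
  · exact zero_le_one
  · rfl

theorem filter_pairIndicator {E : Type*} [Fintype E] [DecidableEq E] {n : ℕ} (e : E ≃ Fin n)
    (t : Fin 4) (f : E → Fin 4) :
    Finset.univ.filter (fun i => pairIndicator t (e.arrowCongr (Equiv.refl _) f) (e i) = true)
      = Est f 0 t := by
  simp [pairIndicator, Est]

/-- For a uniformly random 4-coloring of a finite set `E` and closed downward families
`𝒰, 𝒱, 𝒲`:
`P(𝒰_{ab} ∩ 𝒱_{ac} ∩ 𝒲_{ad}) ≤ P(𝒰_{ab}) · P(𝒱_{ac}) · P(𝒲_{ad})`. -/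
theorem colored_percolation_downward_neg_dep (E : Type*) [Fintype E] [DecidableEq E]
    (𝒰 𝒱 𝒲 : Finset (Finset E))
    (hU : ∀ A ∈ 𝒰, ∀ B : Finset E, B ⊆ A → B ∈ 𝒰)
    (hV : ∀ A ∈ 𝒱, ∀ B : Finset E, B ⊆ A → B ∈ 𝒱)
    (hW : ∀ A ∈ 𝒲, ∀ B : Finset E, B ⊆ A → B ∈ 𝒲) :
    ((Finset.univ.filter (fun f : E → Fin 4 =>
        Est f 0 1 ∈ 𝒰 ∧ Est f 0 2 ∈ 𝒱 ∧ Est f 0 3 ∈ 𝒲)).card : ℚ)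
        / 4 ^ Fintype.card E
      ≤ (((Finset.univ.filter (fun f : E → Fin 4 => Est f 0 1 ∈ 𝒰)).card : ℚ)
            / 4 ^ Fintype.card E)
        * (((Finset.univ.filter (fun f : E → Fin 4 => Est f 0 2 ∈ 𝒱)).card : ℚ)
            / 4 ^ Fintype.card E)
        * (((Finset.univ.filter (fun f : E → Fin 4 => Est f 0 3 ∈ 𝒲)).card : ℚ)
            / 4 ^ Fintype.card E) := by
  have h := sum_mul_le_of_antitone (Fintype.card E) _ _ _
    (antitone_indicator_of_lower (Fintype.equivFin E) 𝒰 hU)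
    (antitone_indicator_of_lower (Fintype.equivFin E) 𝒱 hV)
    (antitone_indicator_of_lower (Fintype.equivFin E) 𝒲 hW)
  simp only [← ((Fintype.equivFin E).arrowCongr (Equiv.refl (Fin 4))).sum_comp,
    filter_pairIndicator, ite_zero_mul_ite_zero, mul_one, Finset.sum_boole,
    and_assoc] at h
  have h4 : (0 : ℚ) < 4 ^ Fintype.card E := by positivity
  have h16 : (16 : ℚ) ^ Fintype.card E = 4 ^ Fintype.card E * 4 ^ Fintype.card E := by
    rw [← mul_pow]; norm_num
  rw [h16] at h
  rw [div_mul_div_comm, div_mul_div_comm, div_le_div_iff₀ h4 (by positivity)]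
  nlinarith [mul_le_mul_of_nonneg_right h h4.le]
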